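/- For every integer a ≥ 4, the MV assignment M^a V^a on the 1×(2a+1) strip of stamps satisfies c(M^a V^a) = 2a² − 3a + 2. -/

import Mathlib

/-- A crease direction: mountain or valley. -/
inductive MV : Type
  | M : MV
  | V : MV
deriving DecidableEq

/-- The value `σ(i)` of a layer ordering at face `i`, as a natural number
(`0` if `i` is out of range). -/
def faceVal {n : ℕ} (σ : Equiv.Perm (Fin n)) (i : ℕ) : ℕ :=
  if h : i < n then (σ ⟨i, h⟩ : Fin n) else 0

/-- Condition (1): the layer ordering respects the mountain–valley assignment. -/
def MVRelations (n : ℕ) (μ : ℕ → MV) (σ : Equiv.Perm (Fin n)) : Prop :=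
  ∀ i, i + 1 < n →
    if (μ i = MV.M ∧ Even i) ∨ (μ i = MV.V ∧ Odd i)
    then faceVal σ (i + 1) < faceVal σ i
    else faceVal σ i < faceVal σ (i + 1)

/-- `x` lies strictly between `lo` and `hi` (in either order). -/
def StrictlyBetween (x a b : ℕ) : Prop := min a b < x ∧ x < max a b

/-- Condition (2): no two creases on the same side cross. -/
def NoCrossings (n : ℕ) (σ : Equiv.Perm (Fin n)) : Prop :=
  ∀ i j, i + 1 < n → j + 1 < n → i % 2 = j % 2 →
    ¬ Xor' (StrictlyBetween (faceVal σ j) (faceVal σ i) (faceVal σ (i + 1)))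
           (StrictlyBetween (faceVal σ (j + 1)) (faceVal σ i) (faceVal σ (i + 1)))

/-- A valid layer ordering for the MV assignment `μ` on the `1 × n` strip. -/
def ValidLayerOrdering (n : ℕ) (μ : ℕ → MV) (σ : Equiv.Perm (Fin n)) : Prop :=
  MVRelations n μ σ ∧ NoCrossings n σ

/-- `c(μ)`: the number of valid layer orderings for `μ` on the `1 × n` strip. -/
noncomputable def foldCount (n : ℕ) (μ : ℕ → MV) : ℕ :=
  Nat.card {σ : Equiv.Perm (Fin n) // ValidLayerOrdering n μ σ}

/-!
Cut the strip at its middle face. Each half is a strip with all creases alike, and such a strip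
folds into a spiral that winds outwards up to some turning face and inwards from there on; call
the turning faces `p` and `q`. Outside the turns both spirals wind around each other in a forced
way. The tails behind the turns are separated, hence again in forced position, unless `p` and `q`
are adjacent; then the tail of one arm may enter the other spiral, and both tails stay nested up to
some face `r`. For given `p`, `q`, `r` the order of any two faces is determined by the parity of an
explicit level, and conversely these levels always define a folding. There are `a ^ 2` pairs `p`,
`q`, and `|p - q| = 1` contributes `(a - 1) * (a - 2)` further triples.
-/

/-- `u` lies on side `k` of `v`: above `v` if `k` is even, below `v` if `k` is odd. The side is a
natural number, of which only the parity matters, because face indices serve as sides. -/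
def Beyond (k : ℕ) (u v : ℤ) : Prop := (k % 2 = 0 → v < u) ∧ (k % 2 = 1 → u < v)

/-- The points `c` and `d` are not separated by the pair `a`, `b`: the integer form of the condition
that `NoCrossings` imposes on two creases. -/
def NonCrossing (a b c d : ℤ) : Prop :=
  (min a b < c ∧ c < max a b) ↔ (min a b < d ∧ d < max a b)

namespace Beyond

variable {k l : ℕ} {u u₁ u₂ v w : ℤ}

theorem congr (h : Beyond k u v) (hkl : k % 2 = l % 2) : Beyond l u v := by
  simpa only [Beyond, hkl] using h

theorem symm (h : Beyond k u v) : Beyond (k + 1) v u := by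
  simp only [Beyond] at *; omega

theorem trans (huv : Beyond k u v) (hvw : Beyond k v w) : Beyond k u w :=
  ⟨fun hk => (hvw.1 hk).trans (huv.1 hk), fun hk => (huv.2 hk).trans (hvw.2 hk)⟩

theorem neg (h : Beyond k u v) : Beyond (k + 1) (-u) (-v) := by
  simp only [Beyond] at *; omega

theorem neg_comm (h : Beyond k u (-v)) : Beyond k v (-u) := by
  simpa only [neg_neg] using (h.neg.symm).congr (l := k) (by omega)

theorem ne (h : Beyond k u v) : u ≠ v := by
  simp only [Beyond] at h; omega

theorem mod_two_eq (hk : Beyond k u v) (hl : Beyond l u v) :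
    k % 2 = l % 2 := by
  simp only [Beyond] at *; omega

theorem not_succ (h : Beyond k u v) : ¬Beyond (k + 1) u v := by
  simp only [Beyond] at *; omega

theorem or_succ_of_ne (k : ℕ) (h : u ≠ v) : Beyond k u v ∨ Beyond (k + 1) u v := by
  simp only [Beyond]; omega

theorem of_between (h₁ : Beyond k u₁ v) (h₂ : Beyond k u₂ v) (hu₁ : Beyond l u u₁)
    (hu₂ : Beyond (l + 1) u u₂) : Beyond k u v := by
  by_cases hkl : k % 2 = l % 2
  · exact (hu₁.congr hkl.symm).trans h₁
  · exact (hu₂.congr (by omega)).trans h₂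

theorem neg_one_pow_mul (a : ℕ) (h : Beyond (a + k) u v) :
    Beyond k ((-1) ^ a * u) ((-1) ^ a * v) := by
  rcases Nat.even_or_odd a with ha | ha
  · simpa only [ha.neg_one_pow, one_mul] using h.congr (by have := Nat.even_iff.mp ha; omega)
  · simpa only [ha.neg_one_pow, neg_one_mul] using
      h.neg.congr (by have := Nat.odd_iff.mp ha; omega)

theorem of_neg_one_pow_mul {a : ℕ} (h : Beyond k ((-1) ^ a * u) ((-1) ^ a * v)) :
    Beyond (a + k) u v := by
  simpa only [← mul_assoc, ← mul_pow, neg_one_mul, neg_neg, one_pow, one_mul] using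
    neg_one_pow_mul (k := a + k) a (h.congr (by omega))

end Beyond

namespace NonCrossing

variable {k : ℕ} {a b c d : ℤ}

theorem swap_left (h : NonCrossing a b c d) : NonCrossing b a c d := by
  simpa only [NonCrossing, min_comm, max_comm] using h

theorem swap_right (h : NonCrossing a b c d) : NonCrossing a b d c :=
  Iff.symm h

theorem neg (h : NonCrossing a b c d) : NonCrossing (-a) (-b) (-c) (-d) := by
  unfold NonCrossing at *; omega

theorem neg_one_pow_mul (n : ℕ) (h : NonCrossing a b c d) :
    NonCrossing ((-1) ^ n * a) ((-1) ^ n * b) ((-1) ^ n * c) ((-1) ^ n * d) := by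
  rcases neg_one_pow_eq_or ℤ n with hn | hn
  · simpa only [hn, one_mul] using h
  · simpa only [hn, neg_one_mul] using h.neg

theorem beyond_of_beyond (h : NonCrossing a b c d) (hac : Beyond k a c)
    (hbc : Beyond (k + 1) b c) : Beyond k a d ∧ Beyond (k + 1) b d := by
  simp only [NonCrossing, Beyond] at *; omega

theorem of_beyond {k₁ k₂ k₃ k₄ : ℕ} (hac : Beyond k₁ a c)
    (had : Beyond k₂ a d) (hbc : Beyond k₃ b c) (hbd : Beyond k₄ b d)
    (hsum : (k₁ + k₂ + k₃ + k₄) % 2 = 0) : NonCrossing a b c d := by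
  simp only [NonCrossing, Beyond] at *; omega

end NonCrossing

/-- The layers `x 0, …, x a` alternate down and up, and no two creases on the same side cross: a
folding of a strip of `a` mountain creases. -/
structure IsZigzag (a : ℕ) (x : ℕ → ℤ) : Prop where
  ne : ∀ i j, i < j → j ≤ a → x i ≠ x j
  beyond : ∀ i, i < a → Beyond i (x i) (x (i + 1))
  nonCrossing : ∀ i j, i < a → j < a → i % 2 = j % 2 →
    NonCrossing (x i) (x (i + 1)) (x j) (x (j + 1))

/-- In a zigzag that spirals outwards up to face `p` and inwards from there, face `j` lies on
side `armLevel p i j` of face `i`, for `i < j`. -/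
def armLevel (p i j : ℕ) : ℕ := max (i + 1) (min p j)

/-- The faces `0, …, a` spiral outwards up to face `p` and inwards afterwards. -/
def IsSpiral (a p : ℕ) (x : ℕ → ℤ) : Prop :=
  ∀ i j, i < j → j ≤ a → Beyond (armLevel p i j) (x j) (x i)

namespace IsSpiral

variable {a b p i j : ℕ} {x : ℕ → ℤ}

theorem outward (h : IsSpiral a p x) (hij : i < j) (hjp : j ≤ p) (hja : j ≤ a) :
    Beyond j (x j) (x i) :=
  (h i j hij hja).congr (by unfold armLevel; omega)

theorem inward (h : IsSpiral a p x) (hpi : p ≤ i + 1) (hij : i < j) (hja : j ≤ a) :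
    Beyond (i + 1) (x j) (x i) :=
  (h i j hij hja).congr (by unfold armLevel; omega)

theorem turn (h : IsSpiral a p x) (hip : i < p) (hpj : p ≤ j) (hja : j ≤ a) :
    Beyond p (x j) (x i) :=
  (h i j (by omega) hja).congr (by unfold armLevel; omega)

theorem succ (h : IsSpiral b p x)
    (hnew : ∀ i, i ≤ b → Beyond (armLevel p i (b + 1)) (x (b + 1)) (x i)) :
    IsSpiral (b + 1) p x := by
  intro i j hij hjb
  rcases Nat.le_succ_iff.mp hjb with hj | rfl
  · exact h i j hij hj
  · exact hnew i (Nat.lt_succ_iff.mp hij)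

theorem succ_of_turned (h : IsSpiral b p x) (hx : IsZigzag a x) (hp : 1 ≤ p) (hpb : p < b)
    (hba : b < a) : IsSpiral (b + 1) p x := by
  obtain ⟨b, rfl⟩ : ∃ c, b = c + 2 := ⟨b - 2, by omega⟩
  have last : Beyond (b + 3) (x (b + 3)) (x (b + 2)) := (hx.beyond (b + 2) hba).symm
  have between : Beyond b (x b) (x (b + 3)) ∧ Beyond (b + 1) (x (b + 1)) (x (b + 3)) := by
    refine (hx.nonCrossing b (b + 2) (by omega) hba (by omega)).beyond_of_beyond ?_ ?_
    · exact (h.inward (by omega) (by omega) le_rfl).symm.congr (by omega)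
    · exact (h.inward (by omega) (by omega) le_rfl).symm.congr (by omega)
  refine h.succ fun i hi => ?_
  rcases (by omega : i = b + 2 ∨ i = b + 1 ∨ i ≤ b) with rfl | rfl | hib
  · exact last.congr (by unfold armLevel; omega)
  · exact between.2.symm.congr (by unfold armLevel; omega)
  · have level_eq : armLevel p i (b + 1) = armLevel p i (b + 3) ∧
        armLevel p i (b + 2) = armLevel p i (b + 3) := by unfold armLevel; omega
    exact .of_between (l := b + 2) (level_eq.1 ▸ h i (b + 1) (by omega) (by omega))
      (level_eq.2 ▸ h i (b + 2) (by omega) le_rfl) between.2.symm last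

theorem succ_of_beyond (h : IsSpiral b b x) (hx : IsZigzag a x) (hba : b < a)
    (hout : Beyond (b + 1) (x (b + 1)) (x (b - 1))) : IsSpiral (b + 1) (b + 1) x := by
  have outer : IsSpiral b (b + 1) x := fun i j hij hjb =>
    (h i j hij hjb).congr (by unfold armLevel; omega)
  refine outer.succ fun i hi => Beyond.congr (k := b + 1) ?_ (by unfold armLevel; omega)
  rcases (by omega : i = b ∨ i = b - 1 ∨ i < b - 1) with rfl | rfl | hib
  · exact (hx.beyond i hba).symm
  · exact hout
  · exact hout.trans ((h.outward hib (by omega) (by omega)).congr (by omega))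

theorem succ_of_beyond_succ (h : IsSpiral b b x) (hx : IsZigzag a x) (hba : b < a)
    (hin : Beyond b (x (b + 1)) (x (b - 1))) : IsSpiral (b + 1) b x := by
  refine h.succ fun i hi => ?_
  rcases hi.eq_or_lt with rfl | hib
  · exact (hx.beyond i hba).symm.congr (by unfold armLevel; omega)
  refine Beyond.congr (k := b) ?_ (by unfold armLevel; omega)
  rcases (by omega : i = b - 1 ∨ i < b - 1) with rfl | hi'
  · exact hin
  obtain ⟨b, rfl⟩ : ∃ c, b = c + 2 := ⟨b - 2, by omega⟩
  have turn : Beyond (b + 2) (x (b + 3)) (x b) := by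
    refine (Beyond.or_succ_of_ne (b + 2) (hx.ne b (b + 3) (by omega) (by omega)).symm).resolve_right
      fun hlt => ?_
    have inside := (hx.nonCrossing b (b + 2) (by omega) hba (by omega)).swap_right.beyond_of_beyond
      (hlt.symm.congr (l := b) (by omega)) (hin.symm.congr (by omega))
    exact (h.outward (by omega) le_rfl le_rfl).symm.not_succ (inside.1.congr (by omega))
  rcases (by omega : i = b ∨ i < b) with rfl | hi'
  · exact turn
  · exact turn.trans ((h.outward hi' (by omega) (by omega)).congr (by omega))

end IsSpiral

theorem IsZigzag.exists_isSpiral {a b : ℕ} {x : ℕ → ℤ} (hx : IsZigzag a x) (hb : 1 ≤ b)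
    (hba : b ≤ a) : ∃ p, 1 ≤ p ∧ p ≤ b ∧ IsSpiral b p x := by
  induction b, hb using Nat.le_induction with
  | base =>
    refine ⟨1, le_rfl, le_rfl, fun i j hij hj => ?_⟩
    obtain ⟨rfl, rfl⟩ : i = 0 ∧ j = 1 := by omega
    exact (hx.beyond 0 hba).symm
  | succ b hb ih =>
    obtain ⟨p, hp, hpb, h⟩ := ih (by omega)
    rcases hpb.eq_or_lt with rfl | hlt
    · rcases Beyond.or_succ_of_ne p (hx.ne (p - 1) (p + 1) (by omega) hba).symm with hin | hout
      · exact ⟨p, hp, by omega, h.succ_of_beyond_succ hx hba hin⟩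
      · exact ⟨p + 1, by omega, le_rfl, h.succ_of_beyond hx hba hout⟩
    · exact ⟨p, hp, by omega, h.succ_of_turned hx hp hlt hba⟩

/-- The two arms of a strip seen from its middle face, which is `x 0 = -w 0`: the arm `x` as it is,
the arm `w` upside down, so that both are zigzags. -/
structure ArmPair (a : ℕ) (x w : ℕ → ℤ) : Prop where
  left : IsZigzag a x
  right : IsZigzag a w
  zero : x 0 = -w 0
  ne : ∀ i j, i ≤ a → j ≤ a → 0 < i + j → x i ≠ -w j
  nonCrossing_left : ∀ i j, i < a → j < a → (i + j) % 2 = 1 →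
    NonCrossing (x i) (x (i + 1)) (-w j) (-w (j + 1))
  nonCrossing_right : ∀ i j, i < a → j < a → (i + j) % 2 = 1 →
    NonCrossing (w i) (w (i + 1)) (-x j) (-x (j + 1))

theorem ArmPair.symm {a : ℕ} {x w : ℕ → ℤ} (h : ArmPair a x w) : ArmPair a w x where
  left := h.right
  right := h.left
  zero := by rw [h.zero, neg_neg]
  ne i j hi hj hij he := h.ne j i hj hi (by omega) (by rw [he, neg_neg])
  nonCrossing_left := h.nonCrossing_right
  nonCrossing_right := h.nonCrossing_left

/-- A pair of arms that are spirals with turning faces `p` and `q`. -/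
structure SpiralPair (a p q : ℕ) (x w : ℕ → ℤ) : Prop extends ArmPair a x w where
  left_spiral : IsSpiral a p x
  right_spiral : IsSpiral a q w
  left_pos : 1 ≤ p
  left_le : p ≤ a
  right_pos : 1 ≤ q
  right_le : q ≤ a

namespace SpiralPair

variable {a b p q r i j m : ℕ} {x w : ℕ → ℤ}

theorem symm (h : SpiralPair a p q x w) : SpiralPair a q p w x where
  toArmPair := h.toArmPair.symm
  left_spiral := h.right_spiral
  right_spiral := h.left_spiral
  left_pos := h.right_pos
  left_le := h.right_le
  right_pos := h.left_pos
  right_le := h.left_le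

theorem outward_far (h : SpiralPair a p q x w) (hmp : m + 2 ≤ p)
    (hm : 0 < m + j → Beyond m (x m) (-w j)) (hjm : j ≤ m) :
    Beyond (m + 2) (x (m + 2)) (-w j) := by
  have hpa := h.left_le
  have out : Beyond (m + 2) (x (m + 2)) (x m) :=
    h.left_spiral.outward (by omega) hmp (by omega)
  rcases (m + j).eq_zero_or_pos with h0 | hpos
  · obtain ⟨rfl, rfl⟩ : m = 0 ∧ j = 0 := by omega
    exact h.zero ▸ out
  · exact out.trans ((hm hpos).congr (by omega))

theorem outward_step (h : SpiralPair a p q x w) (hm : 1 ≤ m) (hmp : m ≤ p)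
    (ih : ∀ i j, i ≤ p → j ≤ q → max i j < m → 0 < i + j → Beyond (max i j) (x i) (-w j))
    (hjq : j ≤ q) (hjm : j ≤ m) : Beyond m (x m) (-w j) := by
  have hpa := h.left_le
  obtain ⟨n, rfl⟩ : ∃ n, m = n + 1 := ⟨m - 1, by omega⟩
  have near (hnq : n ≤ q) : Beyond (n + 1) (x (n + 1)) (-w n) := by
    rcases n with _ | n
    · exact h.zero ▸ (h.left.beyond 0 (by omega)).symm
    · have far : Beyond (n + 2) (x (n + 2)) (-w n) := h.outward_far hmp
        (fun hn => (ih n n (by omega) (by omega) (by omega) hn).congr (by omega)) le_rfl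
      exact ((h.nonCrossing_left (n + 1) n (by omega) (by omega) (by omega)).beyond_of_beyond
        ((ih (n + 1) n (by omega) (by omega) (by omega) (by omega)).congr (by omega)) far).2
  rcases (by omega : j < n ∨ j = n ∨ j = n + 1) with hj | rfl | rfl
  · obtain ⟨n, rfl⟩ : ∃ k, n = k + 1 := ⟨n - 1, by omega⟩
    exact h.outward_far hmp
      (fun hn => (ih n j (by omega) hjq (by omega) hn).congr (by omega)) (by omega)
  · exact near hjq
  · exact (near (by omega)).trans (h.right.beyond n (by omega)).neg

theorem outward (h : SpiralPair a p q x w) (hi : i ≤ p) (hj : j ≤ q) (hij : 0 < i + j) :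
    Beyond (max i j) (x i) (-w j) := by
  obtain ⟨m, hm⟩ : ∃ m, m = max i j := ⟨_, rfl⟩
  induction m using Nat.strong_induction_on generalizing i j with
  | _ m ih =>
    rcases le_total j i with hji | hij'
    · refine (h.outward_step (m := i) (by omega) hi (fun i' j' hi' hj' hlt hpos => ?_) hj
        hji).congr (by omega)
      exact ih _ (by omega) hi' hj' hpos rfl
    · refine ((h.symm.outward_step (m := j) (by omega) hj (fun j' i' hj' hi' hlt hpos => ?_) hi
        hij').congr (by omega)).neg_comm
      exact ((ih (max i' j') (by omega) hi' hj' (by omega) rfl).congr (by omega)).neg_comm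

theorem left_tail_outer (h : SpiralPair a p q x w) (hpi : p < i) (hia : i ≤ a) (hpj : p ≤ j)
    (hjq : j ≤ q) : Beyond j (x i) (-w j) := by
  have hp := h.left_pos
  refine .of_between (l := p + 1) (u₁ := x p) (u₂ := x (p - 1)) ?_ ?_
    (h.left_spiral.inward (by omega) hpi hia)
    ((h.left_spiral.turn (by omega) hpi.le hia).congr (by omega))
  · exact (h.outward le_rfl hjq (by omega)).congr (by omega)
  · exact (h.outward (by omega) hjq (by omega)).congr (by omega)

theorem left_tail_inner (h : SpiralPair a p q x w) (hpq : p ≤ q) (hpi : p < i) (hia : i ≤ a)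
    (hjp : j < p) : Beyond p (x i) (-w j) := by
  have hp := h.left_pos
  have hqa := h.right_le
  have first : Beyond p (x (p + 1)) (-w (p - 1)) := by
    refine (Beyond.or_succ_of_ne p (h.ne _ _ (by omega) (by omega) (by omega))).resolve_right
      fun hlt => (h.left_tail_outer (lt_add_one p) (by omega) le_rfl hpq).not_succ ?_
    have cross := h.nonCrossing_left p (p - 1) (by omega) (by omega) (by omega)
    rw [Nat.sub_add_cancel hp] at cross
    exact (cross.beyond_of_beyond
      ((h.outward le_rfl (by omega) (by omega)).congr (by omega)) hlt).2
  have near : Beyond p (x i) (-w (p - 1)) := by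
    rcases (Nat.succ_le_of_lt hpi).eq_or_lt with rfl | hlt
    · exact first
    · exact ((h.left_spiral.inward (by omega) hlt hia).congr (by omega)).trans first
  rcases (Nat.le_sub_one_of_lt hjp).eq_or_lt with rfl | hlt
  · exact near
  · exact near.trans ((h.right_spiral.outward hlt (by omega) (by omega)).neg.congr (by omega))

theorem beyond_of_le (h : SpiralPair a p q x w) (hpq : p ≤ q) (hia : i ≤ a) (hjq : j ≤ q)
    (hij : 0 < i + j) : Beyond (max (min i p) j) (x i) (-w j) := by
  rcases le_or_gt i p with hip | hpi
  · exact (h.outward hip hjq hij).congr (by omega)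
  rcases le_or_gt p j with hpj | hjp
  · exact (h.left_tail_outer hpi hia hpj hjq).congr (by omega)
  · exact (h.left_tail_inner hpq hpi hia hjp).congr (by omega)

theorem right_tail (h : SpiralPair a p q x w) (hpq : p < q) (hia : i ≤ a)
    (hiq : min i p + 2 ≤ q) (hqj : q < j) (hja : j ≤ a) : Beyond q (x i) (-w j) := by
  obtain ⟨q, rfl⟩ : ∃ k, q = k + 2 := ⟨q - 2, by omega⟩
  have tail : Beyond (q + 2) (-w q) (-w j) :=
    (h.right_spiral.turn (by omega) hqj.le hja).symm.neg.congr (by omega)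
  rcases (i + q).eq_zero_or_pos with h0 | hpos
  · obtain ⟨rfl, rfl⟩ : i = 0 ∧ q = 0 := by omega
    exact h.zero ▸ tail
  · exact ((h.beyond_of_le hpq.le hia (by omega) hpos).congr (by omega)).trans tail

/-- The tail of the left arm, from face `p` on, and the faces `p + 1, …, b` of the right arm lie
inside each other, with face `r` of the right arm as the last one to go around the left arm. -/
def NestedTo (a p b r : ℕ) (x w : ℕ → ℤ) : Prop :=
  ∀ i j, p ≤ i → i ≤ a → p + 1 ≤ j → j ≤ b → Beyond (min i (min j r - 2)) (x i) (-w j)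

theorem nested_inner (h : SpiralPair a p (p + 1) x w) (hn : NestedTo a p b b x w) (hpb : p + 1 ≤ b)
    (hba : b < a) (hpi : p ≤ i) (hib : i + 1 < b) : Beyond i (x i) (-w (b + 1)) := by
  rcases (Nat.succ_le_of_lt hib).eq_or_lt with rfl | hlt
  · have hp := h.left_pos
    obtain ⟨n, rfl⟩ : ∃ n, i = n + 1 := ⟨i - 1, by omega⟩
    have previous : Beyond n (x n) (-w (n + 3)) := by
      rcases hpi.eq_or_lt with rfl | hpn
      · exact (h.right_tail (by omega) (by omega) (by omega) (by omega) (by omega)).congr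
          (by omega)
      · exact (hn n (n + 3) (by omega) (by omega) (by omega) le_rfl).congr (by omega)
    exact ((h.nonCrossing_left n (n + 3) (by omega) (by omega) (by omega)).beyond_of_beyond previous
      ((hn (n + 1) (n + 3) hpi (by omega) hpb le_rfl).congr (by omega))).2
  · refine (Beyond.of_between (l := b + 1) (u₁ := w b) (u₂ := w (b - 1)) ?_ ?_
      (h.right_spiral.inward (by omega) (by omega) (by omega))
      ((h.right_spiral.inward (by omega) (by omega) (by omega)).congr (by omega))).neg_comm
    · exact ((hn i b hpi (by omega) hpb le_rfl).congr (by omega)).neg_comm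
    · exact ((hn i (b - 1) hpi (by omega) (by omega) (by omega)).congr (by omega)).neg_comm

theorem nested_outer (h : SpiralPair a p (p + 1) x w) (hn : NestedTo a p b b x w) (hpb : p + 1 ≤ b)
    (hba : b < a) (hout : Beyond (b + 1) (x (b - 1)) (-w (b + 1))) (hbi : b ≤ i + 1)
    (hia : i ≤ a) : Beyond (b + 1) (x i) (-w (b + 1)) := by
  have hp := h.left_pos
  have next : Beyond (b + 1) (x b) (-w (b + 1)) := by
    have cross := h.nonCrossing_right b (b - 1) hba (by omega) (by omega)
    rw [Nat.sub_add_cancel (by omega)] at cross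
    refine (cross.beyond_of_beyond (k := b) ?_ hout.neg_comm).2.neg_comm
    exact ((hn (b - 1) b (by omega) (by omega) hpb le_rfl).congr (by omega)).neg_comm
  rcases (by omega : i = b - 1 ∨ i = b ∨ b < i) with rfl | rfl | hlt
  · exact hout
  · exact next
  · exact (h.left_spiral.inward (by omega) hlt hia).trans next

theorem nested_succ_of_turned (h : SpiralPair a p (p + 1) x w) (hn : NestedTo a p b r x w)
    (hpr : p + 1 ≤ r) (hrb : r < b) (hba : b < a) (hpi : p ≤ i) (hia : i ≤ a) :
    Beyond (min i (min (b + 1) r - 2)) (x i) (-w (b + 1)) := by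
  refine (Beyond.of_between (l := r + 1) (u₁ := w r) (u₂ := w (r + 1)) ?_ ?_
    (h.right_spiral.inward (by omega) (by omega) (by omega))
    (h.right_spiral.inward (by omega) (by omega) (by omega))).neg_comm
  · exact ((hn i r hpi hia hpr hrb.le).congr (by omega)).neg_comm
  · exact ((hn i (r + 1) hpi hia (by omega) hrb).congr (by omega)).neg_comm

theorem exists_nestedTo (h : SpiralPair a p (p + 1) x w) (hpb : p + 1 ≤ b) (hba : b ≤ a) :
    ∃ r, p + 1 ≤ r ∧ r ≤ b ∧ NestedTo a p b r x w := by
  have hp := h.left_pos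
  induction b, hpb using Nat.le_induction with
  | base =>
    refine ⟨p + 1, le_rfl, le_rfl, fun i j hpi hia hpj hjb => ?_⟩
    obtain rfl : j = p + 1 := by omega
    exact (h.beyond_of_le (by omega) hia le_rfl (by omega)).congr (by omega)
  | succ b hpb ih =>
    obtain ⟨r, hpr, hrb, hn⟩ := ih (by omega)
    have extend {s : ℕ} (hrs : r ≤ s) (hbs : r = s ∨ b ≤ r)
        (hnew : ∀ i, p ≤ i → i ≤ a → Beyond (min i (min (b + 1) s - 2)) (x i) (-w (b + 1))) :
        NestedTo a p (b + 1) s x w := by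
      intro i j hpi hia hpj hjb
      rcases Nat.le_succ_iff.mp hjb with hj | rfl
      · exact (hn i j hpi hia hpj hj).congr (by omega)
      · exact hnew i hpi hia
    rcases hrb.eq_or_lt with rfl | hlt
    · rcases Beyond.or_succ_of_ne r (h.ne (r - 1) (r + 1) (by omega) hba (by omega)) with hin | hout
      · refine ⟨r, hpr, by omega, extend le_rfl (.inl rfl) fun i hpi hia => ?_⟩
        rcases lt_or_ge (i + 1) r with hir | hri
        · exact (h.nested_inner hn hpr hba hpi hir).congr (by omega)
        rcases (by omega : i = r - 1 ∨ r - 1 < i) with rfl | hlt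
        · exact hin.congr (by omega)
        · exact ((h.left_spiral.inward (by omega) hlt hia).congr (by omega)).trans
            (hin.congr (by omega))
      · refine ⟨r + 1, by omega, le_rfl, extend (by omega) (.inr le_rfl) fun i hpi hia => ?_⟩
        rcases lt_or_ge (i + 1) r with hir | hri
        · exact (h.nested_inner hn hpr hba hpi hir).congr (by omega)
        · exact (h.nested_outer hn hpr hba hout hri hia).congr (by omega)
    · exact ⟨r, hpr, by omega, extend le_rfl (.inl rfl) fun i hpi hia =>
        h.nested_succ_of_turned hn hpr hlt hba hpi hia⟩

end SpiralPair

/-- The parameters of a folding: the turning faces `p` and `q` of the arms, and the face `r` up to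
which the tails are nested. The tails interact only if `p` and `q` are adjacent; otherwise `r` is
fixed to `max p q`. -/
def Admissible (a p q r : ℕ) : Prop :=
  1 ≤ p ∧ p ≤ a ∧ 1 ≤ q ∧ q ≤ a ∧ max p q ≤ r ∧ r ≤ a ∧ (q = p + 1 ∨ p = q + 1 ∨ r = max p q)

theorem Admissible.symm {a p q r : ℕ} (h : Admissible a p q r) : Admissible a q p r := by
  unfold Admissible at *; omega

/-- In a folding with parameters `p`, `q`, `r`, face `i` of the left arm lies on side
`crossLevel p q r i j` of face `j` of the right arm. -/
def crossLevel (p q r i j : ℕ) : ℕ :=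
  if q = p + 1 ∧ p ≤ i ∧ q ≤ j then min i (min j r - 2)
  else if p = q + 1 ∧ p ≤ i ∧ q ≤ j then min j (min i r - 2)
  else max (min i p) (min j q)

section crossLevel

variable {p q r i j : ℕ}

theorem crossLevel_comm (p q r i j : ℕ) : crossLevel q p r j i = crossLevel p q r i j := by
  unfold crossLevel; grind

theorem crossLevel_of_nested (hi : p ≤ i) (hj : p + 1 ≤ j) :
    crossLevel p (p + 1) r i j = min i (min j r - 2) :=
  if_pos ⟨rfl, hi, hj⟩

theorem crossLevel_of_lt (h : i < p ∨ j < q) : crossLevel p q r i j = max (min i p) (min j q) := by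
  rw [crossLevel, if_neg (by omega), if_neg (by omega)]

theorem crossLevel_of_ne (hpq : q ≠ p + 1) (hqp : p ≠ q + 1) :
    crossLevel p q r i j = max (min i p) (min j q) := by
  rw [crossLevel, if_neg (by omega), if_neg (by omega)]

end crossLevel

/-- Both arms are spirals, and their faces are ordered relative to each other as prescribed by the
parameters `p`, `q`, `r`. -/
structure IsDoubleSpiral (a p q r : ℕ) (x w : ℕ → ℤ) : Prop where
  left : IsSpiral a p x
  right : IsSpiral a q w
  cross : ∀ i j, i ≤ a → j ≤ a → 0 < i + j → Beyond (crossLevel p q r i j) (x i) (-w j)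

theorem IsDoubleSpiral.symm {a p q r : ℕ} {x w : ℕ → ℤ} (h : IsDoubleSpiral a p q r x w) :
    IsDoubleSpiral a q p r w x where
  left := h.right
  right := h.left
  cross i j hi hj hij := crossLevel_comm p q r j i ▸ (h.cross j i hj hi (by omega)).neg_comm

theorem SpiralPair.tail_of_eq {a p i j : ℕ} {x w : ℕ → ℤ} (h : SpiralPair a p p x w) (hia : i ≤ a)
    (hpj : p < j) (hja : j ≤ a) : Beyond p (x i) (-w j) := by
  have hp := h.left_pos
  have start {i : ℕ} (hip : i ≤ p) : Beyond p (x i) (-w j) :=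
    ((h.symm.beyond_of_le le_rfl hja hip (by omega)).congr (by omega)).neg_comm
  rcases le_or_gt i p with hip | hpi
  · exact start hip
  · exact (h.left_spiral.turn (by omega) hpi.le hia).trans (start (Nat.sub_le p 1))

theorem SpiralPair.exists_isDoubleSpiral_of_le {a p q : ℕ} {x w : ℕ → ℤ}
    (h : SpiralPair a p q x w) (hpq : p ≤ q) :
    ∃ r, Admissible a p q r ∧ IsDoubleSpiral a p q r x w := by
  have hp := h.left_pos
  have hqa := h.right_le
  by_cases hadj : q = p + 1
  · subst hadj
    obtain ⟨r, hpr, hra, hn⟩ := h.exists_nestedTo hqa le_rfl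
    refine ⟨r, by unfold Admissible; omega, h.left_spiral, h.right_spiral, fun i j hi hj hij => ?_⟩
    by_cases hnest : p ≤ i ∧ p + 1 ≤ j
    · rw [crossLevel_of_nested hnest.1 hnest.2]
      exact hn i j hnest.1 hi hnest.2 hj
    rw [crossLevel_of_lt (by omega)]
    rcases le_or_gt j (p + 1) with hjp | hpj
    · exact (h.beyond_of_le hpq hi hjp hij).congr (by omega)
    · exact (h.right_tail (by omega) hi (by omega) hpj hj).congr (by omega)
  · refine ⟨q, by unfold Admissible; omega, h.left_spiral, h.right_spiral, fun i j hi hj hij => ?_⟩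
    rw [crossLevel_of_ne hadj (by omega)]
    rcases le_or_gt j q with hjq | hqj
    · exact (h.beyond_of_le hpq hi hjq hij).congr (by omega)
    rcases hpq.eq_or_lt with rfl | hlt
    · exact (h.tail_of_eq hi hqj hj).congr (by omega)
    · exact (h.right_tail hlt hi (by omega) hqj hj).congr (by omega)

theorem ArmPair.exists_isDoubleSpiral {a : ℕ} {x w : ℕ → ℤ} (h : ArmPair a x w) (ha : 1 ≤ a) :
    ∃ p q r, Admissible a p q r ∧ IsDoubleSpiral a p q r x w := by
  obtain ⟨p, hp, hpa, hx⟩ := h.left.exists_isSpiral ha le_rfl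
  obtain ⟨q, hq, hqa, hw⟩ := h.right.exists_isSpiral ha le_rfl
  have hs : SpiralPair a p q x w := ⟨h, hx, hw, hp, hpa, hq, hqa⟩
  rcases le_total p q with hpq | hqp
  · obtain ⟨r, hr, hd⟩ := hs.exists_isDoubleSpiral_of_le hpq
    exact ⟨p, q, r, hr, hd⟩
  · obtain ⟨r, hr, hd⟩ := hs.symm.exists_isDoubleSpiral_of_le hqp
    exact ⟨p, q, r, hr.symm, hd.symm⟩

section armLevel

variable {p q i j k : ℕ}

theorem armLevel_sum_even (p : ℕ) (hij : i + 1 < j) (hpar : i % 2 = j % 2) :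
    (armLevel p i j + armLevel p i (j + 1) + armLevel p (i + 1) j +
      armLevel p (i + 1) (j + 1)) % 2 = 0 := by
  unfold armLevel; omega

theorem armLevel_trans (hij : i < j) (hjk : j < k)
    (h : armLevel p i j % 2 = armLevel p j k % 2) :
    armLevel p i k % 2 = armLevel p i j % 2 := by
  unfold armLevel at *; omega

theorem eq_of_armLevel_mod_two {a : ℕ} (hp : 1 ≤ p ∧ p ≤ a) (hq : 1 ≤ q ∧ q ≤ a)
    (h : ∀ i j, i < j → j ≤ a → armLevel p i j % 2 = armLevel q i j % 2) : p = q := by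
  unfold armLevel at h
  rcases lt_trichotomy p q with hlt | heq | hgt
  · have := h (p - 1) (p + 1) (by omega) (by omega)
    omega
  · exact heq
  · have := h (q - 1) (q + 1) (by omega) (by omega)
    omega

end armLevel

section crossLevel

variable {p q r i j k : ℕ}

theorem crossLevel_zero_left (hp : 1 ≤ p) (hq : 1 ≤ q) (hj : 1 ≤ j) :
    crossLevel p q r 0 j = armLevel q 0 j := by
  rw [crossLevel_of_lt (.inl hp), armLevel]; omega

theorem crossLevel_zero_right (hp : 1 ≤ p) (hq : 1 ≤ q) (hi : 1 ≤ i) :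
    crossLevel p q r i 0 = armLevel p 0 i := by
  rw [← crossLevel_comm, crossLevel_zero_left hq hp hi]

theorem crossLevel_trans (hp : 1 ≤ p) (hq : 1 ≤ q) (hij : i < j)
    (h : armLevel p i j % 2 = crossLevel p q r i k % 2) :
    crossLevel p q r j k % 2 = crossLevel p q r i k % 2 := by
  unfold armLevel crossLevel at *
  split_ifs at * <;> omega

theorem max_min_sum_even (p q : ℕ) (hij : (i + j) % 2 = 1) :
    (max (min i p) (min j q) + max (min i p) (min (j + 1) q) + max (min (i + 1) p) (min j q) +
      max (min (i + 1) p) (min (j + 1) q)) % 2 = 0 := by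
  rcases lt_or_ge i p with hip | hpi
  · rcases lt_or_ge j q with hjq | hqj <;> omega
  · omega

theorem crossLevel_sum_even_of_adjacent (hp : 1 ≤ p) (hr : p + 1 ≤ r) (hij : (i + j) % 2 = 1) :
    (crossLevel p (p + 1) r i j + crossLevel p (p + 1) r i (j + 1) +
      crossLevel p (p + 1) r (i + 1) j + crossLevel p (p + 1) r (i + 1) (j + 1)) % 2 = 0 := by
  by_cases houter : i + 1 < p ∨ j < p
  · simp only [crossLevel_of_lt (show i < p ∨ j < p + 1 by omega),
      crossLevel_of_lt (show i < p ∨ j + 1 < p + 1 by omega),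
      crossLevel_of_lt (show i + 1 < p ∨ j < p + 1 by omega),
      crossLevel_of_lt (show i + 1 < p ∨ j + 1 < p + 1 by omega)]
    exact max_min_sum_even p (p + 1) hij
  have corner : crossLevel p (p + 1) r (i + 1) (j + 1) = min (i + 1) (min (j + 1) r - 2) :=
    crossLevel_of_nested (by omega) (by omega)
  rw [corner]
  rcases lt_or_ge i p with hi | hi <;> rcases lt_or_ge p j with hj | hj
  · rw [crossLevel_of_lt (.inl hi), crossLevel_of_lt (.inl hi),
      crossLevel_of_nested (by omega) (by omega)]
    omega
  · rw [crossLevel_of_lt (.inl hi), crossLevel_of_lt (.inl hi), crossLevel_of_lt (by omega)]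
    omega
  · rw [crossLevel_of_nested hi (by omega), crossLevel_of_nested hi (by omega),
      crossLevel_of_nested (by omega) (by omega)]
    omega
  · rw [crossLevel_of_lt (by omega), crossLevel_of_nested hi (by omega),
      crossLevel_of_lt (by omega)]
    omega

theorem crossLevel_sum_even (hp : 1 ≤ p) (hq : 1 ≤ q) (hr : max p q ≤ r)
    (hij : (i + j) % 2 = 1) :
    (crossLevel p q r i j + crossLevel p q r i (j + 1) + crossLevel p q r (i + 1) j +
      crossLevel p q r (i + 1) (j + 1)) % 2 = 0 := by
  by_cases hpq : q = p + 1
  · subst hpq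
    exact crossLevel_sum_even_of_adjacent hp (by omega) hij
  by_cases hqp : p = q + 1
  · subst hqp
    have := crossLevel_sum_even_of_adjacent (r := r) (i := j) (j := i) hq (by omega) (by omega)
    simp only [← crossLevel_comm (q + 1) q]
    omega
  · simp only [crossLevel_of_ne hpq hqp]
    exact max_min_sum_even p q hij

theorem eq_of_crossLevel_mod_two_of_adjacent {a s : ℕ} (hp : 1 ≤ p) (hr : p + 1 ≤ r ∧ r ≤ a)
    (hs : p + 1 ≤ s ∧ s ≤ a) (h : ∀ i j, i ≤ a → j ≤ a → 0 < i + j →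
      crossLevel p (p + 1) r i j % 2 = crossLevel p (p + 1) s i j % 2) : r = s := by
  have h_nested (t : ℕ) (hpt : p + 1 ≤ t) (hta : t < a) :
      min (t - 1) (min (t + 1) r - 2) % 2 = min (t - 1) (min (t + 1) s - 2) % 2 := by
    have := h (t - 1) (t + 1) (by omega) hta (by omega)
    rwa [crossLevel_of_nested (by omega) (by omega),
      crossLevel_of_nested (by omega) (by omega)] at this
  rcases lt_trichotomy r s with hlt | heq | hgt
  · have := h_nested r hr.1 (by omega)
    omega
  · exact heq
  · have := h_nested s hs.1 (by omega)
    omega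

theorem eq_of_crossLevel_mod_two {a s : ℕ} (hr : Admissible a p q r) (hs : Admissible a p q s)
    (h : ∀ i j, i ≤ a → j ≤ a → 0 < i + j →
      crossLevel p q r i j % 2 = crossLevel p q s i j % 2) : r = s := by
  obtain ⟨hp, -, hq, -, hpr, hra, hadj⟩ := hr
  obtain ⟨-, -, -, -, hps, hsa, hadj'⟩ := hs
  by_cases hpq : q = p + 1
  · subst hpq
    exact eq_of_crossLevel_mod_two_of_adjacent hp (by omega) (by omega) h
  by_cases hqp : p = q + 1
  · subst hqp
    refine eq_of_crossLevel_mod_two_of_adjacent (a := a) hq (by omega) (by omega)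
      fun i j hi hj hij => ?_
    simpa only [crossLevel_comm] using h j i hj hi (by omega)
  · omega

end crossLevel

/-- The layers of the faces `0, …, n - 1` are ordered by the levels `L`: for `u < v`, face `u` lies
on side `L u v` of face `v`. -/
def FollowsLevels (n : ℕ) (L : ℕ → ℕ → ℕ) (g : ℕ → ℤ) : Prop :=
  ∀ u v, u < v → v < n → Beyond (L u v) (g u) (g v)

/-- The levels `L` describe a transitive relation on the faces `0, …, n - 1`. -/
def IsTransLevel (n : ℕ) (L : ℕ → ℕ → ℕ) : Prop :=
  ∀ u v w, u < v → v < w → w < n → L u v % 2 = L v w % 2 → L u w % 2 = L u v % 2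

/-- The signed levels of a whole folding of a strip with middle face `a` and parameters `p`, `q`,
`r`. The offset `a` accounts for the layers being reversed by `(-1) ^ a` on passing to the arms. -/
def stripLevel (a p q r u v : ℕ) : ℕ :=
  a + if v ≤ a then armLevel p (a - v) (a - u)
    else if u ≤ a then crossLevel p q r (a - u) (v - a)
    else armLevel q (u - a) (v - a)

section stripLevel

variable {a p q r u v : ℕ}

theorem stripLevel_of_le (hv : v ≤ a) :
    stripLevel a p q r u v = a + armLevel p (a - v) (a - u) := by
  rw [stripLevel, if_pos hv]

theorem stripLevel_of_le_of_le (hp : 1 ≤ p) (hq : 1 ≤ q) (hua : u ≤ a) (hav : a ≤ v)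
    (huv : u < v) : stripLevel a p q r u v = a + crossLevel p q r (a - u) (v - a) := by
  rcases hav.eq_or_lt with rfl | hlt
  · rw [stripLevel_of_le le_rfl, Nat.sub_self, crossLevel_zero_right hp hq (by omega)]
  · rw [stripLevel, if_neg (by omega), if_pos hua]

theorem stripLevel_of_ge (hp : 1 ≤ p) (hq : 1 ≤ q) (hau : a ≤ u) (huv : u < v) :
    stripLevel a p q r u v = a + armLevel q (u - a) (v - a) := by
  rcases hau.eq_or_lt with rfl | hlt
  · rw [stripLevel_of_le_of_le hp hq le_rfl huv.le huv, Nat.sub_self,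
      crossLevel_zero_left hp hq (by omega)]
  · rw [stripLevel, if_neg (by omega), if_neg (by omega)]

theorem stripLevel_succ_of_lt (hu : u < a) : stripLevel a p q r u (u + 1) % 2 = u % 2 := by
  rw [stripLevel_of_le hu, armLevel]; omega

theorem stripLevel_succ_of_ge (hp : 1 ≤ p) (hq : 1 ≤ q) (hu : a ≤ u) :
    stripLevel a p q r u (u + 1) % 2 = (u + 1) % 2 := by
  rw [stripLevel_of_ge hp hq hu (lt_add_one u), armLevel]; omega

theorem stripLevel_sum_even (hp : 1 ≤ p) (hq : 1 ≤ q) (hr : max p q ≤ r) (huv : u + 1 < v)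
    (hpar : u % 2 = v % 2) :
    (stripLevel a p q r u v + stripLevel a p q r u (v + 1) + stripLevel a p q r (u + 1) v +
      stripLevel a p q r (u + 1) (v + 1)) % 2 = 0 := by
  rcases (by omega : v < a ∨ a ≤ u ∨ u < a ∧ a ≤ v) with hv | hu | ⟨hu, hv⟩
  · obtain ⟨i, hi⟩ : ∃ i, a = v + 1 + i := ⟨a - (v + 1), by omega⟩
    have := armLevel_sum_even p (i := i) (j := a - (u + 1)) (by omega) (by omega)
    simp only [stripLevel_of_le (show v + 1 ≤ a by omega), stripLevel_of_le hv.le,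
      show a - u = a - (u + 1) + 1 by omega, show a - v = i + 1 by omega,
      show a - (v + 1) = i by omega]
    omega
  · have := armLevel_sum_even q (i := u - a) (j := v - a) (by omega) (by omega)
    rw [stripLevel_of_ge hp hq hu (by omega), stripLevel_of_ge hp hq hu (by omega),
      stripLevel_of_ge hp hq (by omega) huv, stripLevel_of_ge hp hq (by omega) (by omega),
      Nat.sub_add_comm hu, Nat.sub_add_comm (show a ≤ v by omega)]
    omega
  · have := crossLevel_sum_even hp hq hr (i := a - (u + 1)) (j := v - a) (by omega)
    rw [stripLevel_of_le_of_le hp hq hu.le hv (by omega),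
      stripLevel_of_le_of_le hp hq hu.le (by omega) (by omega),
      stripLevel_of_le_of_le hp hq (show u + 1 ≤ a from hu) hv huv,
      stripLevel_of_le_of_le hp hq (show u + 1 ≤ a from hu) (by omega) (by omega),
      show a - u = a - (u + 1) + 1 by omega, Nat.sub_add_comm hv]
    omega

theorem isTransLevel_stripLevel (n : ℕ) (hp : 1 ≤ p) (hq : 1 ≤ q) :
    IsTransLevel n (stripLevel a p q r) := by
  intro u v w huv hvw _ h
  rcases le_or_gt w a with hw | hw
  · rw [stripLevel_of_le (show v ≤ a by omega), stripLevel_of_le hw] at h ⊢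
    have := armLevel_trans (p := p) (i := a - w) (j := a - v) (k := a - u)
    omega
  rcases le_total v a with hv | hv
  · rw [stripLevel_of_le hv, stripLevel_of_le_of_le hp hq hv hw.le hvw] at h
    rw [stripLevel_of_le hv, stripLevel_of_le_of_le hp hq (by omega) hw.le (by omega)]
    have := crossLevel_trans hp hq (r := r) (i := a - v) (j := a - u) (k := w - a)
    omega
  rcases le_total u a with hu | hu
  · rw [stripLevel_of_le_of_le hp hq hu hv huv, stripLevel_of_ge hp hq hv hvw] at h
    rw [stripLevel_of_le_of_le hp hq hu hv huv, stripLevel_of_le_of_le hp hq hu hw.le (by omega),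
      ← crossLevel_comm, ← crossLevel_comm p]
    rw [← crossLevel_comm] at h
    have := crossLevel_trans hq hp (r := r) (i := v - a) (j := w - a) (k := a - u)
    omega
  · rw [stripLevel_of_ge hp hq hu huv, stripLevel_of_ge hp hq hv hvw] at h
    rw [stripLevel_of_ge hp hq hu huv, stripLevel_of_ge hp hq hu (by omega)]
    have := armLevel_trans (p := q) (i := u - a) (j := v - a) (k := w - a)
    omega

theorem eq_of_stripLevel_mod_two {p' q' r' : ℕ} (h : Admissible a p q r)
    (h' : Admissible a p' q' r') (hlevel : ∀ u v, u < v → v < a + a + 1 →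
      stripLevel a p q r u v % 2 = stripLevel a p' q' r' u v % 2) :
    p = p' ∧ q = q' ∧ r = r' := by
  have ⟨hp, hpa, hq, hqa, _⟩ := h
  have ⟨hp', hpa', hq', hqa', _⟩ := h'
  obtain rfl : p = p' := eq_of_armLevel_mod_two ⟨hp, hpa⟩ ⟨hp', hpa'⟩ fun i j hij hj => by
    have := hlevel (a - j) (a - i) (by omega) (by omega)
    rw [stripLevel_of_le (by omega), stripLevel_of_le (by omega), Nat.sub_sub_self hj,
      Nat.sub_sub_self (by omega)] at this
    omega
  obtain rfl : q = q' := eq_of_armLevel_mod_two ⟨hq, hqa⟩ ⟨hq', hqa'⟩ fun i j hij hj => by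
    have := hlevel (a + i) (a + j) (by omega) (by omega)
    rw [stripLevel_of_ge hp hq (by omega) (by omega), stripLevel_of_ge hp hq' (by omega) (by omega),
      Nat.add_sub_cancel_left, Nat.add_sub_cancel_left] at this
    omega
  refine ⟨rfl, rfl, eq_of_crossLevel_mod_two h h' fun i j hi hj hij => ?_⟩
  have := hlevel (a - i) (a + j) (by omega) (by omega)
  rw [stripLevel_of_le_of_le hp hq (by omega) (by omega) (by omega),
    stripLevel_of_le_of_le hp hq (by omega) (by omega) (by omega), Nat.sub_sub_self hi,
    Nat.add_sub_cancel_left] at this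
  omega

end stripLevel

/-- The layers `g 0, …, g (a + a)` fold a strip with `a` mountain creases followed by `a` valley
creases. -/
structure IsFolding (a : ℕ) (g : ℕ → ℤ) : Prop where
  ne : ∀ u v, u < v → v < a + a + 1 → g u ≠ g v
  mountain : ∀ u, u < a → Beyond u (g u) (g (u + 1))
  valley : ∀ u, a ≤ u → u < a + a → Beyond (u + 1) (g u) (g (u + 1))
  nonCrossing : ∀ u v, u < a + a → v < a + a → u % 2 = v % 2 →
    NonCrossing (g u) (g (u + 1)) (g v) (g (v + 1))

/-- The layers of the faces `a, a - 1, …, 0`, reversed when `a` is odd so that the first crease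
leads downwards. -/
def leftArm (a : ℕ) (g : ℕ → ℤ) (i : ℕ) : ℤ := (-1) ^ a * g (a - i)

/-- The layers of the faces `a, a + 1, …`, reversed when `a` is even so that the first crease leads
downwards. -/
def rightArm (a : ℕ) (g : ℕ → ℤ) (j : ℕ) : ℤ := -((-1) ^ a * g (a + j))

theorem IsFolding.armPair {a : ℕ} {g : ℕ → ℤ} (h : IsFolding a g) :
    ArmPair a (leftArm a g) (rightArm a g) := by
  set y : ℕ → ℤ := fun u => (-1) ^ a * g u
  have y_ne (u v : ℕ) (huv : u < v) (hv : v < a + a + 1) : y u ≠ y v :=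
    fun heq => h.ne u v huv hv (mul_left_cancel₀ (pow_ne_zero a (by decide)) heq)
  have y_cross (u v : ℕ) (hu : u < a + a) (hv : v < a + a) (huv : u % 2 = v % 2) :
      NonCrossing (y u) (y (u + 1)) (y v) (y (v + 1)) :=
    (h.nonCrossing u v hu hv huv).neg_one_pow_mul a
  have left_pred (i : ℕ) (hi : i < a) : leftArm a g i = y (a - (i + 1) + 1) := by
    rw [leftArm, show a - (i + 1) + 1 = a - i by omega]
  exact
  { left :=
    { ne := fun i j hij hj => (y_ne (a - j) (a - i) (by omega) (by omega)).symm
      beyond := fun i hi => by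
        rw [left_pred i hi]
        exact ((h.mountain (a - (i + 1)) (by omega)).symm.congr
          (by omega)).neg_one_pow_mul a
      nonCrossing := fun i j hi hj hij => by
        rw [left_pred i hi, left_pred j hj]
        exact (y_cross (a - (i + 1)) (a - (j + 1)) (by omega) (by omega)
          (by omega)).swap_left.swap_right }
    right :=
    { ne := fun i j hij hj => neg_injective.ne (y_ne (a + i) (a + j) (by omega) (by omega))
      beyond := fun i hi =>
        (((h.valley (a + i) (by omega) (by omega)).congr (l := a + (i + 1))
          (by omega)).neg_one_pow_mul a).neg.congr (by omega)
      nonCrossing := fun i j hi hj hij =>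
        (y_cross (a + i) (a + j) (by omega) (by omega) (by omega)).neg }
    zero := (neg_neg _).symm
    ne := fun i j hi hj hij => by
      rw [rightArm, neg_neg]
      exact y_ne (a - i) (a + j) (by omega) (by omega)
    nonCrossing_left := fun i j hi hj hij => by
      rw [left_pred i hi, rightArm, rightArm, neg_neg, neg_neg]
      exact (y_cross (a - (i + 1)) (a + j) (by omega) (by omega) (by omega)).swap_left
    nonCrossing_right := fun i j hi hj hij => by
      rw [left_pred j hj]
      exact (y_cross (a + i) (a - (j + 1)) (by omega) (by omega) (by omega)).neg.swap_right }

theorem IsDoubleSpiral.followsLevels {a p q r : ℕ} {g : ℕ → ℤ} (hp : 1 ≤ p) (hq : 1 ≤ q)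
    (h : IsDoubleSpiral a p q r (leftArm a g) (rightArm a g)) :
    FollowsLevels (a + a + 1) (stripLevel a p q r) g := by
  intro u v huv hv
  have left_arm (w : ℕ) (hw : w ≤ a) : leftArm a g (a - w) = (-1) ^ a * g w := by
    rw [leftArm, Nat.sub_sub_self hw]
  have right_arm (w : ℕ) (hw : a ≤ w) : -rightArm a g (w - a) = (-1) ^ a * g w := by
    rw [rightArm, neg_neg, Nat.add_sub_cancel' hw]
  rcases (by omega : v ≤ a ∨ u ≤ a ∧ a ≤ v ∨ a ≤ u) with hva | ⟨hua, hav⟩ | hau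
  · rw [stripLevel_of_le hva]
    have := h.left (a - v) (a - u) (by omega) (by omega)
    rw [left_arm u (by omega), left_arm v hva] at this
    exact this.of_neg_one_pow_mul
  · rw [stripLevel_of_le_of_le hp hq hua hav huv]
    have := h.cross (a - u) (v - a) (by omega) (by omega) (by omega)
    rw [left_arm u hua, right_arm v hav] at this
    exact this.of_neg_one_pow_mul
  · rw [stripLevel_of_ge hp hq hau huv]
    have := (h.right (u - a) (v - a) (by omega) (by omega)).neg.symm
    rw [right_arm u hau, right_arm v (by omega)] at this
    exact this.of_neg_one_pow_mul.congr (by omega)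

theorem Admissible.isFolding {a p q r : ℕ} {g : ℕ → ℤ} (h : Admissible a p q r)
    (hg : FollowsLevels (a + a + 1) (stripLevel a p q r) g) : IsFolding a g := by
  obtain ⟨hp, -, hq, -, hr, -⟩ := h
  have cross_of_lt (u v : ℕ) (huv : u < v) (hv : v < a + a) (hpar : u % 2 = v % 2) :
      NonCrossing (g u) (g (u + 1)) (g v) (g (v + 1)) ∧
        NonCrossing (g v) (g (v + 1)) (g u) (g (u + 1)) := by
    have sum_even := stripLevel_sum_even (a := a) (r := r) hp hq hr (show u + 1 < v by omega) hpar
    have h₁ := hg u v huv (by omega)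
    have h₂ := hg u (v + 1) (by omega) (by omega)
    have h₃ := hg (u + 1) v (by omega) (by omega)
    have h₄ := hg (u + 1) (v + 1) (by omega) (by omega)
    exact ⟨.of_beyond h₁ h₂ h₃ h₄ sum_even,
      .of_beyond h₁.symm h₃.symm h₂.symm h₄.symm (by omega)⟩
  refine ⟨fun u v huv hv => (hg u v huv hv).ne,
    fun u hu => (hg u (u + 1) (lt_add_one u) (by omega)).congr (stripLevel_succ_of_lt hu),
    fun u hau hu => (hg u (u + 1) (lt_add_one u) (by omega)).congr
      (stripLevel_succ_of_ge hp hq hau), fun u v hu hv hpar => ?_⟩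
  rcases lt_trichotomy u v with hlt | rfl | hgt
  · exact (cross_of_lt u v hlt hv hpar).1
  · simp only [NonCrossing]; omega
  · exact (cross_of_lt v u hgt hu hpar.symm).2

/-- The layers of a layer ordering as integers. -/
def layer {n : ℕ} (σ : Equiv.Perm (Fin n)) (i : ℕ) : ℤ := faceVal σ i

theorem layer_lt_layer {n : ℕ} (σ : Equiv.Perm (Fin n)) (u v : Fin n) :
    layer σ u < layer σ v ↔ σ u < σ v := by
  simp [layer, faceVal]

theorem layer_ne_layer {n u v : ℕ} (σ : Equiv.Perm (Fin n)) (huv : u < v) (hv : v < n) :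
    layer σ u ≠ layer σ v := by
  have hu : u < n := huv.trans hv
  simp [layer, faceVal, hu, hv, Fin.val_inj, huv.ne]

theorem not_xor_strictlyBetween_iff (a b c d : ℕ) :
    ¬ Xor (StrictlyBetween c a b) (StrictlyBetween d a b) ↔ NonCrossing a b c d := by
  rw [xor_iff_not_iff, not_not]
  simp only [StrictlyBetween, NonCrossing]
  omega

theorem mvRelations_iff {n : ℕ} (μ : ℕ → MV) (σ : Equiv.Perm (Fin n)) :
    MVRelations n μ σ ↔ ∀ i, i + 1 < n →
      Beyond (if μ i = MV.M then i else i + 1) (layer σ i) (layer σ (i + 1)) := by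
  refine forall₂_congr fun i _ => ?_
  cases μ i <;> simp [Beyond, layer, Nat.even_iff, Nat.odd_iff] <;> split_ifs <;> omega

theorem noCrossings_iff {n : ℕ} (σ : Equiv.Perm (Fin n)) :
    NoCrossings n σ ↔ ∀ i j, i + 1 < n → j + 1 < n → i % 2 = j % 2 →
      NonCrossing (layer σ i) (layer σ (i + 1)) (layer σ j) (layer σ (j + 1)) :=
  forall₅_congr fun _ _ _ _ _ => not_xor_strictlyBetween_iff _ _ _ _

theorem validLayerOrdering_iff_isFolding {a : ℕ} (σ : Equiv.Perm (Fin (a + a + 1))) :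
    ValidLayerOrdering (a + a + 1) (fun i => if i < a then MV.M else MV.V) σ ↔
      IsFolding a (layer σ) := by
  rw [ValidLayerOrdering, mvRelations_iff, noCrossings_iff]
  constructor
  · rintro ⟨h_crease, h_cross⟩
    exact
    { ne := fun u v huv hv => layer_ne_layer σ huv hv
      mountain := fun u hu => by simpa [hu] using h_crease u (by omega)
      valley := fun u hau hu => by simpa [hau.not_gt] using h_crease u (by omega)
      nonCrossing := fun u v hu hv => h_cross u v (by omega) (by omega) }
  · intro h
    refine ⟨fun i hi => ?_, fun i j hi hj => h.nonCrossing i j (by omega) (by omega)⟩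
    rcases lt_or_ge i a with hia | hai
    · simpa [hia] using h.mountain i hia
    · simpa [hai.not_gt] using h.valley i hai (by omega)

/-- According to the levels `L`, face `u` lies below face `v`. -/
def LiesBelow (L : ℕ → ℕ → ℕ) (u v : ℕ) : Prop :=
  u < v ∧ L u v % 2 = 1 ∨ v < u ∧ L v u % 2 = 0

theorem IsTransLevel.liesBelow_trans {n u v w : ℕ} {L : ℕ → ℕ → ℕ} (h : IsTransLevel n L)
    (huv : LiesBelow L u v) (hvw : LiesBelow L v w) (hu : u < n) (hv : v < n) (hw : w < n) :
    LiesBelow L u w := by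
  rcases huv with ⟨huv, h₁⟩ | ⟨hvu, h₁⟩ <;> rcases hvw with ⟨hvw, h₂⟩ | ⟨hwv, h₂⟩
  · have := h u v w huv hvw hw
    unfold LiesBelow; omega
  · rcases lt_trichotomy u w with huw | rfl | hwu
    · have := h u w v huw hwv hv
      unfold LiesBelow; omega
    · omega
    · have := h w u v hwu huv hv
      unfold LiesBelow; omega
  · rcases lt_trichotomy u w with huw | rfl | hwu
    · have := h v u w hvu huw hw
      unfold LiesBelow; omega
    · omega
    · have := h v w u hvw hwu hu
      unfold LiesBelow; omega
  · have := h w v u hwv hvu hu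
    unfold LiesBelow; omega

theorem IsTransLevel.isStrictTotalOrder {n : ℕ} {L : ℕ → ℕ → ℕ} (h : IsTransLevel n L) :
    IsStrictTotalOrder (Fin n) (fun u v => LiesBelow L u v) where
  trichotomous u v := by simp only [LiesBelow, ← Fin.val_inj]; omega
  irrefl u := by simp only [LiesBelow]; omega
  trans _ _ _ huv hvw := h.liesBelow_trans huv hvw (Fin.is_lt _) (Fin.is_lt _) (Fin.is_lt _)

theorem followsLevels_layer_iff {n : ℕ} {L : ℕ → ℕ → ℕ} (σ : Equiv.Perm (Fin n)) :
    FollowsLevels n L (layer σ) ↔ ∀ u v : Fin n, σ u < σ v ↔ LiesBelow L u v := by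
  simp only [← layer_lt_layer, LiesBelow]
  constructor
  · intro h u v
    have huv := h u v
    have hvu := h v u
    simp only [Beyond] at huv hvu
    rcases lt_trichotomy (u : ℕ) v with hlt | heq | hgt
    · omega
    · rw [heq]
      omega
    · omega
  · intro h u v huv hv
    have hlevel := h ⟨u, huv.trans hv⟩ ⟨v, hv⟩
    have hne := layer_ne_layer σ huv hv
    simp only [Beyond] at *
    omega

theorem exists_equiv_lt_iff {α : Type*} [Fintype α] {n : ℕ} (hn : Fintype.card α = n)
    (r : α → α → Prop) [IsStrictTotalOrder α r] : ∃ e : α ≃ Fin n, ∀ u v, e u < e v ↔ r u v := by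
  classical
  let := linearOrderOfSTO r
  exact ⟨(Fintype.orderIsoFinOfCardEq α hn).symm.toEquiv, fun u v =>
    (Fintype.orderIsoFinOfCardEq α hn).symm.lt_iff_lt⟩

theorem equiv_eq_of_lt_imp_lt {α β : Type*} [LinearOrder β] [WellFoundedLT β] {e f : α ≃ β}
    (h : ∀ u v, e u < e v → f u < f v) : e = f := by
  have mono : StrictMono (f ∘ e.symm) := fun i j hij => h _ _ (by simpa using hij)
  have comp_eq_id : f ∘ e.symm = id :=
    (mono.range_inj strictMono_id).mp (by simp [(f.surjective.comp e.symm.surjective).range_eq])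
  ext u
  simpa using (congrFun comp_eq_id (e u)).symm

theorem IsTransLevel.exists_followsLevels {n : ℕ} {L : ℕ → ℕ → ℕ} (h : IsTransLevel n L) :
    ∃ σ : Equiv.Perm (Fin n), FollowsLevels n L (layer σ) := by
  have := h.isStrictTotalOrder
  obtain ⟨σ, hσ⟩ := exists_equiv_lt_iff (Fintype.card_fin n) fun u v : Fin n => LiesBelow L u v
  exact ⟨σ, (followsLevels_layer_iff σ).mpr hσ⟩

theorem FollowsLevels.perm_eq {n : ℕ} {L : ℕ → ℕ → ℕ} {σ τ : Equiv.Perm (Fin n)}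
    (hσ : FollowsLevels n L (layer σ)) (hτ : FollowsLevels n L (layer τ)) : σ = τ :=
  equiv_eq_of_lt_imp_lt fun u v huv =>
    ((followsLevels_layer_iff τ).mp hτ u v).mpr (((followsLevels_layer_iff σ).mp hσ u v).mp huv)

theorem FollowsLevels.parity_eq {n u v : ℕ} {L L' : ℕ → ℕ → ℕ} {g : ℕ → ℤ}
    (h : FollowsLevels n L g) (h' : FollowsLevels n L' g) (huv : u < v) (hv : v < n) :
    L u v % 2 = L' u v % 2 :=
  (h u v huv hv).mod_two_eq (h' u v huv hv)

theorem two_mul_sum_Icc_sub_succ (a : ℕ) :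
    2 * ∑ p ∈ Finset.Icc 1 (a + 1), (a + 1 - (p + 1)) = a * (a - 1) := by
  have reflect : ∑ p ∈ Finset.Icc 1 (a + 1), (a + 1 - (p + 1)) = ∑ i ∈ Finset.range a, i := by
    rw [← Finset.sum_range_reflect, ← Finset.Ico_add_one_right_eq_Icc, Finset.sum_Ico_eq_sum_range,
      Nat.add_sub_cancel, Finset.sum_range_succ, show a + 1 - (1 + a + 1) = 0 by omega, add_zero]
    exact Finset.sum_congr rfl fun i _ => by omega
  rw [reflect, mul_comm, Finset.sum_range_id_mul_two]

/-- The admissible parameters `p`, `q`, `r` of a folding, as elements `⟨(p, q), r⟩`. -/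
def admissibleParams (a : ℕ) : Finset (Σ _ : ℕ × ℕ, ℕ) :=
  (Finset.Icc 1 a ×ˢ Finset.Icc 1 a).sigma fun pq =>
    Finset.Icc (max pq.1 pq.2)
      (if pq.2 = pq.1 + 1 ∨ pq.1 = pq.2 + 1 then a else max pq.1 pq.2)

theorem mem_admissibleParams {a p q r : ℕ} :
    ⟨(p, q), r⟩ ∈ admissibleParams a ↔ Admissible a p q r := by
  simp only [admissibleParams, Finset.mem_sigma, Finset.mem_product, Finset.mem_Icc, Admissible]
  split_ifs <;> omega

theorem sum_Icc_ite_eq_succ {a p : ℕ} (hp : 1 ≤ p) :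
    (∑ q ∈ Finset.Icc 1 a, if q = p + 1 then a - q else 0) = a - (p + 1) := by
  rw [Finset.sum_ite_eq']
  simp only [Finset.mem_Icc]
  split_ifs <;> omega

theorem card_admissibleParams_eq_sum (a : ℕ) :
    (admissibleParams a).card = a ^ 2 + 2 * ∑ p ∈ Finset.Icc 1 a, (a - (p + 1)) := by
  have card_fiber (p q : ℕ) (hp : p ≤ a) (hq : q ≤ a) : (Finset.Icc (max p q)
      (if q = p + 1 ∨ p = q + 1 then a else max p q)).card =
        1 + (if q = p + 1 then a - q else 0) + (if p = q + 1 then a - p else 0) := by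
    rw [Nat.card_Icc]
    split_ifs <;> omega
  have sum_succ : ∑ p ∈ Finset.Icc 1 a, ∑ q ∈ Finset.Icc 1 a, (if q = p + 1 then a - q else 0) =
      ∑ p ∈ Finset.Icc 1 a, (a - (p + 1)) :=
    Finset.sum_congr rfl fun p hp => sum_Icc_ite_eq_succ (Finset.mem_Icc.mp hp).1
  have card_eq : (admissibleParams a).card = ∑ p ∈ Finset.Icc 1 a, ∑ q ∈ Finset.Icc 1 a,
      (1 + (if q = p + 1 then a - q else 0) + (if p = q + 1 then a - p else 0)) := by
    rw [admissibleParams, Finset.card_sigma, Finset.sum_product]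
    exact Finset.sum_congr rfl fun p hp => Finset.sum_congr rfl fun q hq =>
      card_fiber p q (Finset.mem_Icc.mp hp).2 (Finset.mem_Icc.mp hq).2
  rw [card_eq]
  simp only [Finset.sum_add_distrib]
  rw [sum_succ, Finset.sum_comm (f := fun p q => if p = q + 1 then a - p else 0), sum_succ]
  simp only [Finset.sum_const, Nat.card_Icc, Nat.add_sub_cancel, smul_eq_mul, mul_one]
  ring

theorem card_admissibleParams {a : ℕ} (ha : 1 ≤ a) :
    (admissibleParams a).card + 3 * a = 2 * a ^ 2 + 2 := by
  obtain ⟨b, rfl⟩ : ∃ b, a = b + 1 := ⟨a - 1, by omega⟩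
  rw [card_admissibleParams_eq_sum, two_mul_sum_Icc_sub_succ, Nat.mul_sub_one]
  have := Nat.le_mul_self b
  zify [this]
  ring

theorem IsFolding.exists_followsLevels {a : ℕ} {g : ℕ → ℤ} (h : IsFolding a g) (ha : 1 ≤ a) :
    ∃ p q r, Admissible a p q r ∧ FollowsLevels (a + a + 1) (stripLevel a p q r) g := by
  obtain ⟨p, q, r, hpqr, h_spiral⟩ := h.armPair.exists_isDoubleSpiral ha
  have ⟨hp, _, hq, _⟩ := hpqr
  exact ⟨p, q, r, hpqr, h_spiral.followsLevels hp hq⟩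

theorem foldCount_eq_card_admissibleParams {a : ℕ} (ha : 1 ≤ a) :
    foldCount (a + a + 1) (fun i => if i < a then MV.M else MV.V) = (admissibleParams a).card := by
  have exists_ordering (t : admissibleParams a) : ∃ σ : Equiv.Perm (Fin (a + a + 1)),
      FollowsLevels (a + a + 1) (stripLevel a t.1.1.1 t.1.1.2 t.1.2) (layer σ) := by
    have ⟨hp, _, hq, _⟩ := mem_admissibleParams.mp t.2
    exact (isTransLevel_stripLevel _ hp hq).exists_followsLevels
  choose ordering h_ordering using exists_ordering
  have h_valid (t) : ValidLayerOrdering (a + a + 1) (fun i => if i < a then MV.M else MV.V)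
      (ordering t) :=
    (validLayerOrdering_iff_isFolding _).mpr
      ((mem_admissibleParams.mp t.2).isFolding (h_ordering t))
  have h_bij : Function.Bijective fun t => Subtype.mk (ordering t) (h_valid t) := by
    constructor
    · rintro ⟨⟨⟨p, q⟩, r⟩, ht⟩ ⟨⟨⟨p', q'⟩, r'⟩, ht'⟩ heq
      have h_same : ordering ⟨⟨(p, q), r⟩, ht⟩ = ordering ⟨⟨(p', q'), r'⟩, ht'⟩ :=
        congrArg Subtype.val heq
      obtain ⟨rfl, rfl, rfl⟩ := eq_of_stripLevel_mod_two (mem_admissibleParams.mp ht)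
        (mem_admissibleParams.mp ht') fun u v =>
          (h_ordering ⟨⟨(p, q), r⟩, ht⟩).parity_eq (h_same ▸ h_ordering ⟨⟨(p', q'), r'⟩, ht'⟩)
      rfl
    · rintro ⟨σ, hσ⟩
      obtain ⟨p, q, r, h, hg⟩ :=
        ((validLayerOrdering_iff_isFolding σ).mp hσ).exists_followsLevels ha
      exact ⟨⟨⟨(p, q), r⟩, mem_admissibleParams.mpr h⟩, Subtype.ext ((h_ordering _).perm_eq hg)⟩
  rw [foldCount, ← Nat.card_eq_of_bijective _ h_bij, Nat.card_eq_fintype_card, Fintype.card_coe]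

theorem stmt4_general (a : ℕ) (ha : 1 ≤ a) :
    foldCount (a + a + 1) (fun i => if i < a then MV.M else MV.V) + 3 * a = 2 * a ^ 2 + 2 := by
  rw [foldCount_eq_card_admissibleParams ha, card_admissibleParams ha]

/-- Theorem: for `a ≥ 4`, the assignment `M^a V^a` on the `1 × (2a+1)` strip
folds in `2a² − 3a + 2` ways. -/
theorem stmt4 (a : ℕ) (ha : 4 ≤ a) :
    foldCount (a + a + 1) (fun i => if i < a then MV.M else MV.V) =
      2 * a ^ 2 - 3 * a + 2 := by
  have := stmt4_general a (by omega)
  have : 3 * a ≤ 2 * a ^ 2 := by nlinarith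
  omega
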